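/- arXiv:2603.29930 — 2 statements merged into one kernel-verified Lean document; each statement's English description precedes it below -/
import Mathlib

section
/- Let k be a complete nonarchimedean valued field with nontrivial valuation, I a set whose cardinality is not ω₁-measurable, J a set, V and W families of Banach k-vector spaces indexed by I and J, and f : ∏V → ⊕W a nonzero bounded k-linear map. Then for every r ∈ (0,∞) there exist r' > ‖f‖⁻¹ r and finite subsets I₀ ⊆ I, J₀ ⊆ J such that f maps { x ∈ ∏V : x(i) = 0 for all i ∈ I₀, and ‖x(i)‖ ≤ r' for all i } into { y ∈ ⊕W : ‖y(j)‖ ≤ r for all j ∉ J₀ }. -/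
open scoped ENNReal

/-- An ultrafilter is closed under countable intersections (ω₁-complete). -/
def CountablyComplete {α : Type u} (F : Ultrafilter α) : Prop :=
  ∀ s : ℕ → Set α, (∀ n, s n ∈ F) → (⋂ n, s n) ∈ F

/-- A cardinal is ω₁-measurable if it is uncountable and carries a non-principal
ultrafilter closed under countable intersections. -/
def IsOmegaOneMeasurable (c : Cardinal.{u}) : Prop :=
  Cardinal.aleph0 < c ∧
  ∃ (α : Type u) (_ : Cardinal.mk α = c) (F : Ultrafilter α),
    CountablyComplete F ∧ ∀ a : α, F ≠ pure a

/-- A proper ideal containing the singletons, with the Chase-type tail property, cannot exist on a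
set whose cardinality is not ω₁-measurable. -/
theorem chase_ideal_univ {I : Type u} (hI : ¬ IsOmegaOneMeasurable (Cardinal.mk I))
    (P : Set I → Prop) (hmono : ∀ A B, A ⊆ B → P B → P A)
    (hunion : ∀ A B, P A → P B → P (A ∪ B)) (hsing : ∀ i, P {i})
    (hseq : ∀ T : ℕ → Set I, Antitone T → (⋂ n, T n) = ∅ → ∃ n, P (T n)) :
    P Set.univ := by
  by_contra hP
  have hempty : P ∅ := by
    obtain ⟨n, hn⟩ := hseq (fun _ => ∅) (fun _ _ _ => le_rfl) (Set.iInter_const ∅)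
    exact hn
  -- an atom
  obtain ⟨S, hS, hatom⟩ : ∃ S, ¬ P S ∧ ∀ A, A ⊆ S → P A ∨ P (S \ A) := by
    by_contra hno
    have hsplit : ∀ S : {S : Set I // ¬ P S}, ∃ S' : {S : Set I // ¬ P S},
        S'.1 ⊆ S.1 ∧ ¬ P (S.1 \ S'.1) := by
      rintro ⟨S, hS⟩
      by_contra hc
      apply hno
      refine ⟨S, hS, fun A hA => ?_⟩
      by_contra hn
      rw [not_or] at hn
      exact hc ⟨⟨A, hn.1⟩, hA, hn.2⟩
    choose g hg1 hg2 using hsplit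
    let s : ℕ → {S : Set I // ¬ P S} := fun n => Nat.rec ⟨Set.univ, hP⟩ (fun _ t => g t) n
    have hs : ∀ n, s (n + 1) = g (s n) := fun n => rfl
    have hanti : Antitone (fun n => (s n).1) := by
      apply antitone_nat_of_succ_le
      intro n
      change (s (n+1)).1 ⊆ (s n).1
      rw [hs]
      exact hg1 _
    obtain ⟨n, hn⟩ := hseq (fun n => (s n).1 \ ⋂ m, (s m).1)
      (fun a b hab => Set.sdiff_subset_sdiff_left (hanti hab)) (by
        ext i
        simp only [Set.mem_iInter, Set.mem_sdiff, Set.mem_empty_iff_false, iff_false]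
        intro h
        exact (h 0).2 (fun m => (h m).1))
    apply hg2 (s n)
    refine hmono _ _ ?_ hn
    rw [← hs]
    exact Set.sdiff_subset_sdiff_right (Set.iInter_subset (fun m => (s m).1) (n + 1))
  let F0 : Filter I :=
    { sets := {A | P (S \ A)}
      univ_sets := by simpa using hempty
      sets_of_superset := fun {A B} hA hAB =>
        hmono _ _ (Set.sdiff_subset_sdiff_right hAB) hA
      inter_sets := fun {A B} hA hB => by
        change P (S \ (A ∩ B))
        rw [Set.sdiff_inter]
        exact hunion _ _ hA hB }
  have hF0 : ∀ A, A ∈ F0 ↔ P (S \ A) := fun A => Iff.rfl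
  let F : Ultrafilter I := Ultrafilter.ofComplNotMemIff F0 (by
    intro A
    rw [hF0, hF0]
    constructor
    · intro h
      rcases hatom (S \ A) Set.sdiff_subset with h1 | h1
      · exact h1
      · refine absurd (hmono _ _ ?_ h1) h
        rintro i ⟨hi, hi2⟩
        exact ⟨hi, fun h => h.2 (by simpa using hi2)⟩
    · intro h h'
      apply hS
      refine hmono _ _ ?_ (hunion _ _ h h')
      intro i hi
      by_cases hA : i ∈ A
      · exact Or.inr ⟨hi, fun h => h hA⟩
      · exact Or.inl ⟨hi, hA⟩)
  have hF : ∀ A, A ∈ F ↔ P (S \ A) := fun A => Iff.rfl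
  have hcc : CountablyComplete F := by
    intro s hs
    have hfin : ∀ n, P (S \ ⋂ m, ⋂ (_ : m ≤ n), s m) := by
      intro n
      rw [← hF]
      have : (⋂ m ∈ Set.Iic n, s m) ∈ F := by
        rw [← Ultrafilter.mem_coe, Filter.biInter_mem (Set.finite_Iic n)]
        exact fun m _ => hs m
      simpa using this
    rw [hF]
    obtain ⟨n, hn⟩ := hseq (fun n => (⋂ m, ⋂ (_ : m ≤ n), s m) \ ⋂ m, s m)
      (by
        intro a b hab
        apply Set.sdiff_subset_sdiff_left
        intro i hi
        simp only [Set.mem_iInter] at hi ⊢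
        exact fun m hm => hi m (hm.trans hab)) (by
        ext i
        simp only [Set.mem_iInter, Set.mem_sdiff, Set.mem_empty_iff_false, iff_false]
        intro h
        exact (h 0).2 (fun m => (h m).1 m le_rfl))
    refine hmono _ _ ?_ (hunion _ _ (hfin n) hn)
    intro i hi
    by_cases h : i ∈ ⋂ m, ⋂ (_ : m ≤ n), s m
    · exact Or.inr ⟨h, hi.2⟩
    · exact Or.inl ⟨hi.1, h⟩
  have hcompl : ∀ a : I, ({a}ᶜ : Set I) ∈ F := by
    intro a
    rw [hF]
    refine hmono _ _ ?_ (hsing a)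
    intro i hi
    by_contra h
    exact hi.2 h
  have hnp : ∀ a : I, F ≠ pure a := by
    intro a ha
    have := hcompl a
    rw [ha] at this
    simp at this
  apply hI
  refine ⟨?_, I, rfl, F, hcc, hnp⟩
  by_contra hle
  rw [not_lt, Cardinal.mk_le_aleph0_iff] at hle
  have hne : Nonempty I := by
    by_contra hne
    rw [not_nonempty_iff] at hne
    exact hS (by rw [Set.eq_empty_of_isEmpty S]; exact hempty)
  obtain ⟨e, he⟩ := exists_surjective_nat I
  have h := hcc (fun n => {e n}ᶜ) (fun n => hcompl _)
  have h0 : (⋂ n, ({e n}ᶜ : Set I)) = ∅ := by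
    ext i
    obtain ⟨n, rfl⟩ := he i
    simp only [Set.mem_iInter, Set.mem_compl_iff, Set.mem_singleton_iff,
      Set.mem_empty_iff_false, iff_false]
    exact fun h => h n rfl
  rw [h0] at h
  exact F.empty_notMem h

theorem nonarchimedean_chase_lemma_dugas_zimmermann_huisgen
    {k : Type*} [NontriviallyNormedField k] [CompleteSpace k] [IsUltrametricDist k]
    {I J : Type u}
    (hI : ¬ IsOmegaOneMeasurable (Cardinal.mk I))
    (V : I → Type*) [∀ i, NormedAddCommGroup (V i)] [∀ i, NormedSpace k (V i)]
    [∀ i, CompleteSpace (V i)] [∀ i, IsUltrametricDist (V i)]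
    (W : J → Type*) [∀ j, NormedAddCommGroup (W j)] [∀ j, NormedSpace k (W j)]
    [∀ j, CompleteSpace (W j)] [∀ j, IsUltrametricDist (W j)]
    (f : lp V ∞ →L[k] lp W ∞)
    (hf_range : ∀ x : lp V ∞, ∀ ε > (0 : ℝ), {j : J | ε < ‖f x j‖}.Finite)
    (hf_ne : f ≠ 0) :
    ∀ r : ℝ, 0 < r →
      ∃ r' : ℝ, ‖f‖⁻¹ * r < r' ∧
        ∃ I₀ : Set I, I₀.Finite ∧ ∃ J₀ : Set J, J₀.Finite ∧
          ∀ x : lp V ∞, (∀ i ∈ I₀, x i = 0) → (∀ i, ‖x i‖ ≤ r') →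
            ∀ j ∉ J₀, ‖f x j‖ ≤ r := by
  intro r hr
  classical
  have hfpos : 0 < ‖f‖ := norm_pos_iff.mpr hf_ne
  set c : ℝ := ‖f‖⁻¹ * r with hc
  have hcpos : 0 < c := by positivity
  have hfc : ‖f‖ * c = r := by rw [hc]; field_simp
  -- the pointwise operator bound
  have hbound : ∀ (x : lp V ∞) (C : ℝ), 0 ≤ C → (∀ i, ‖x i‖ ≤ C) → ∀ j, ‖f x j‖ ≤ ‖f‖ * C := by
    intro x C hC hx j
    calc ‖f x j‖ ≤ ‖f x‖ := lp.norm_apply_le_norm ENNReal.top_ne_zero _ _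
      _ ≤ ‖f‖ * ‖x‖ := f.le_opNorm x
      _ ≤ ‖f‖ * C := by gcongr; exact lp.norm_le_of_forall_le hC hx
  have hmk : ∀ (y : ∀ i, V i) (C : ℝ), (∀ i, ‖y i‖ ≤ C) → ∃ x : lp V ∞, ∀ i, x i = y i := by
    intro y C hy
    exact ⟨⟨y, memℓp_infty ⟨C, by rintro _ ⟨i, rfl⟩; exact hy i⟩⟩, fun i => rfl⟩
  have hsub : ∀ (j : J) (a b : W j), ‖a - b‖ ≤ max ‖a‖ ‖b‖ := by
    intro j a b
    rw [sub_eq_add_neg, ← norm_neg b]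
    exact IsUltrametricDist.norm_add_le_max _ _
  let Good : Set I → Prop := fun S => ∃ r' : ℝ, c < r' ∧ ∃ J₀ : Set J, J₀.Finite ∧
    ∀ x : lp V ∞, (∀ i, i ∉ S → x i = 0) → (∀ i, ‖x i‖ ≤ r') → ∀ j ∉ J₀, ‖f x j‖ ≤ r
  have gmono : ∀ A B, A ⊆ B → Good B → Good A := by
    rintro A B hAB ⟨r', hr', J₀, hJ, h⟩
    exact ⟨r', hr', J₀, hJ, fun x hx => h x (fun i hi => hx i (fun hA => hi (hAB hA)))⟩
  have gunion : ∀ A B, Good A → Good B → Good (A ∪ B) := by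
    rintro A B ⟨r₁, hr₁, J₁, hJ₁, h₁⟩ ⟨r₂, hr₂, J₂, hJ₂, h₂⟩
    refine ⟨min r₁ r₂, lt_min hr₁ hr₂, J₁ ∪ J₂, hJ₁.union hJ₂, fun x hx hxr j hj => ?_⟩
    rw [Set.mem_union, not_or] at hj
    obtain ⟨x₁, hx₁⟩ := hmk (fun i => if i ∈ A then x i else 0) r₁ (by
      intro i
      split_ifs
      · exact (hxr i).trans (min_le_left _ _)
      · simpa using (hcpos.trans hr₁).le)
    have e₁ : ‖f x₁ j‖ ≤ r := by
      refine h₁ x₁ (fun i hi => by rw [hx₁, if_neg hi]) (fun i => ?_) j hj.1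
      rw [hx₁]
      split_ifs
      · exact (hxr i).trans (min_le_left _ _)
      · simpa using (hcpos.trans hr₁).le
    have e₂ : ‖f (x - x₁) j‖ ≤ r := by
      refine h₂ (x - x₁) (fun i hi => ?_) (fun i => ?_) j hj.2
      · rw [lp.coeFn_sub, Pi.sub_apply, hx₁]
        split_ifs with hA
        · simp
        · rw [hx i (fun h => h.elim hA hi), sub_zero]
      · rw [lp.coeFn_sub, Pi.sub_apply, hx₁]
        split_ifs with hA
        · simpa using (hcpos.trans hr₂).le
        · rw [sub_zero]
          exact (hxr i).trans (min_le_right _ _)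
    have e : f x j = f x₁ j + f (x - x₁) j := by
      rw [map_sub, lp.coeFn_sub, Pi.sub_apply]; abel
    rw [e]
    exact (IsUltrametricDist.norm_add_le_max _ _).trans (max_le e₁ e₂)
  have gempty : Good ∅ := by
    refine ⟨c + 1, by linarith, ∅, Set.finite_empty, fun x hx _ j _ => ?_⟩
    have : x = 0 := by
      ext i
      rw [hx i (Set.notMem_empty i)]
      rfl
    rw [this, map_zero]
    simpa using hr.le
  have gseq : ∀ T : ℕ → Set I, Antitone T → (⋂ n, T n) = ∅ → ∃ n, Good (T n) := by
    intro T hT hT0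
    by_contra hbad
    rw [not_exists] at hbad
    have step : ∀ (n : ℕ) (s : {p : ℝ × Set J // c < p.1 ∧ p.2.Finite}),
        ∃ (x : lp V ∞) (j : J) (s' : {p : ℝ × Set J // c < p.1 ∧ p.2.Finite}),
          (∀ i, i ∉ T n → x i = 0) ∧ (∀ i, ‖x i‖ ≤ s.1.1) ∧ j ∉ s.1.2 ∧ r < ‖f x j‖ ∧
          s'.1.1 ≤ s.1.1 ∧ ‖f‖ * s'.1.1 < ‖f x j‖ ∧
          s'.1.2 = s.1.2 ∪ {j | r < ‖f x j‖} := by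
      rintro n ⟨⟨r₁, B⟩, hr₁, hB⟩
      have hb : ¬ ∀ x : lp V ∞, (∀ i, i ∉ T n → x i = 0) → (∀ i, ‖x i‖ ≤ r₁) →
          ∀ j ∉ B, ‖f x j‖ ≤ r := fun h => hbad n ⟨r₁, hr₁, B, hB, h⟩
      push Not at hb
      obtain ⟨x, hx, hxr, j, hj, hrj⟩ := hb
      obtain ⟨t, ht1, ht2⟩ : ∃ t, c < t ∧ t < ‖f x j‖ / ‖f‖ := by
        apply exists_between
        rw [lt_div_iff₀ hfpos, mul_comm, hfc]
        exact hrj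
      refine ⟨x, j, ⟨⟨min r₁ t, B ∪ {j | r < ‖f x j‖}⟩, lt_min hr₁ ht1,
        hB.union (hf_range x r hr)⟩, hx, hxr, hj, hrj, min_le_left _ _, ?_, rfl⟩
      rw [lt_div_iff₀ hfpos, mul_comm] at ht2
      exact lt_of_le_of_lt (mul_le_mul_of_nonneg_left (min_le_right _ _) hfpos.le) ht2
    choose X Jn S' hX0 hXr hJ hJr hS1 hS2 hS3 using step
    let s : ℕ → {p : ℝ × Set J // c < p.1 ∧ p.2.Finite} := fun n =>
      Nat.rec ⟨⟨c + 1, ∅⟩, by simp, Set.finite_empty⟩ (fun n t => S' n t) n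
    have hs : ∀ n, s (n + 1) = S' n (s n) := fun n => rfl
    let x : ℕ → lp V ∞ := fun n => X n (s n)
    let jn : ℕ → J := fun n => Jn n (s n)
    let ρ : ℕ → ℝ := fun n => (s n).1.1
    have hρc : ∀ n, c < ρ n := fun n => (s n).2.1
    have hρ : Antitone ρ := by
      apply antitone_nat_of_succ_le
      intro n
      change (s (n+1)).1.1 ≤ (s n).1.1
      rw [hs]
      exact hS1 n (s n)
    have hx0 : ∀ n i, i ∉ T n → x n i = 0 := fun n => hX0 n (s n)
    have hxr : ∀ n i, ‖x n i‖ ≤ ρ n := fun n => hXr n (s n)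
    have hjr : ∀ n, r < ‖f (x n) (jn n)‖ := fun n => hJr n (s n)
    have hρs : ∀ n, ‖f‖ * ρ (n + 1) < ‖f (x n) (jn n)‖ := fun n => hS2 n (s n)
    have hBmono : Monotone (fun n => (s n).1.2) := by
      apply monotone_nat_of_le_succ
      intro n
      change (s n).1.2 ⊆ (s (n+1)).1.2
      rw [hs, hS3]
      exact Set.subset_union_left
    have hsmall : ∀ m n, m < n → ‖f (x m) (jn n)‖ ≤ r := by
      intro m n hmn
      by_contra h
      rw [not_le] at h
      have h1 : jn n ∈ (s (m + 1)).1.2 := by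
        rw [hs, hS3]
        exact Or.inr h
      exact hJ n (s n) (hBmono (Nat.succ_le_of_lt hmn) h1)
    have hjinj : Function.Injective jn := by
      have key : ∀ m n, m < n → jn m ≠ jn n := by
        intro m n hmn he
        have h1 := hsmall m n hmn
        rw [← he] at h1
        exact absurd (hjr m) (not_lt.mpr h1)
      intro m n he
      rcases lt_trichotomy m n with h | h | h
      · exact absurd he (key _ _ h)
      · exact h
      · exact absurd he.symm (key _ _ h)
    have hN : ∀ i, ∃ N, i ∉ T N := by
      intro i
      by_contra h
      push Not at h
      have : i ∈ ⋂ n, T n := Set.mem_iInter.mpr h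
      rw [hT0] at this
      exact this
    choose N hN using hN
    have hyb : ∀ n i, ‖∑ m ∈ Finset.Ico n (N i), x m i‖ ≤ ρ n := by
      intro n i
      apply IsUltrametricDist.norm_sum_le_of_forall_le_of_nonneg (hcpos.trans (hρc n)).le
      intro m hm
      exact (hxr m i).trans (hρ (Finset.mem_Ico.mp hm).1)
    have hy : ∀ n, ∃ y : lp V ∞, ∀ i, y i = ∑ m ∈ Finset.Ico n (N i), x m i :=
      fun n => hmk _ (ρ n) (hyb n)
    choose y hy using hy
    have hyr : ∀ n i, ‖y n i‖ ≤ ρ n := fun n i => by rw [hy]; exact hyb n i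
    have hyx : ∀ n, y n = x n + y (n + 1) := by
      intro n
      ext i
      rw [lp.coeFn_add, Pi.add_apply, hy, hy]
      by_cases h : n < N i
      · exact Finset.sum_eq_sum_Ico_succ_bot h _
      · rw [not_lt] at h
        rw [Finset.Ico_eq_empty_of_le h, Finset.Ico_eq_empty_of_le (h.trans (Nat.le_succ n)),
          hx0 n i (fun hi => hN i (hT h hi))]
        simp
    have hfy : ∀ n j, f (y n) j = f (x n) j + f (y (n + 1)) j := by
      intro n j
      rw [hyx n, map_add, lp.coeFn_add, Pi.add_apply]
    have hlarge : ∀ n, r < ‖f (y 0) (jn n)‖ := by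
      intro n
      by_contra h
      rw [not_lt] at h
      have hall : ∀ m, m ≤ n → ‖f (y m) (jn n)‖ ≤ r := by
        intro m
        induction m with
        | zero => exact fun _ => h
        | succ m ih =>
          intro hm
          have e : f (y (m + 1)) (jn n) = f (y m) (jn n) - f (x m) (jn n) := by
            rw [hfy m]; abel
          rw [e]
          exact (hsub _ _ _).trans
            (max_le (ih (by omega)) (hsmall m n (by omega)))
      have e : f (x n) (jn n) = f (y n) (jn n) - f (y (n + 1)) (jn n) := by
        rw [hfy n]; abel
      have h1 : ‖f (x n) (jn n)‖ ≤ max ‖f (y n) (jn n)‖ ‖f (y (n + 1)) (jn n)‖ := by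
        rw [e]
        exact hsub _ _ _
      have h2 := hbound (y (n + 1)) (ρ (n + 1)) (hcpos.trans (hρc (n + 1))).le (hyr (n + 1)) (jn n)
      exact absurd h1 (not_le.mpr (max_lt ((hall n le_rfl).trans_lt (hjr n))
        (h2.trans_lt (hρs n))))
    exact (Set.infinite_range_of_injective hjinj)
      ((hf_range (y 0) r hr).subset (by rintro _ ⟨n, rfl⟩; exact hlarge n))
  obtain ⟨F, hF, r', hr', J₀, hJ₀, h⟩ := chase_ideal_univ hI
    (fun S => ∃ F : Set I, F.Finite ∧ Good (S \ F))
    (fun A B hAB ⟨F, hF, h⟩ => ⟨F, hF, gmono _ _ (Set.sdiff_subset_sdiff_left hAB) h⟩)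
    (fun A B ⟨F, hF, h⟩ ⟨F', hF', h'⟩ => ⟨F ∪ F', hF.union hF', by
      refine gmono _ _ ?_ (gunion _ _ h h')
      rintro i ⟨hi, hiF⟩
      rw [Set.mem_union, not_or] at hiF
      exact hi.imp (fun hi => ⟨hi, hiF.1⟩) (fun hi => ⟨hi, hiF.2⟩)⟩)
    (fun i => ⟨{i}, Set.finite_singleton i, by rw [Set.sdiff_self]; exact gempty⟩)
    (fun T hT hT0 => by
      obtain ⟨n, hn⟩ := gseq T hT hT0
      exact ⟨n, ∅, Set.finite_empty, by rwa [Set.sdiff_empty]⟩)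
  refine ⟨r', hr', F, hF, J₀, hJ₀, fun x hx hxr => h x (fun i hi => hx i ?_) hxr⟩
  by_contra hiF
  exact hi ⟨Set.mem_univ i, hiF⟩
end

section
/- Let k be a complete nonarchimedean valued field with nontrivial valuation whose value group |k^×| is dense in ℝ_{>0}, let I be a set whose cardinality is not ω₁-measurable, J a set, V and W families of Banach k-vector spaces, and f : ∏V → ⊕W a nonzero bounded k-linear map. Then there exist finite subsets I₀ ⊆ I and J₀ ⊆ J such that the operator norm of the induced map f↾^{I₀,J₀} (the composite of the inclusion of the sub-product of ∏V supported off I₀ with f followed by the projection of ⊕W killing the coordinates in J₀) is strictly smaller than ‖f‖. -/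
open scoped ENNReal

theorem chase_norm_sub_le_max {E : Type*} [NormedAddCommGroup E] [IsUltrametricDist E] (a b : E) :
    ‖a - b‖ ≤ max ‖a‖ ‖b‖ := by
  rw [sub_eq_add_neg, ← norm_neg b]
  exact IsUltrametricDist.norm_add_le_max _ _

theorem chase_comb {I : Type u} (hI : ¬ IsOmegaOneMeasurable (Cardinal.mk I))
    (P : Set I → Prop) (mono : ∀ A B, A ⊆ B → P A → P B) (hempty : ¬ P ∅)
    (split : ∀ A B, P A → P (A ∩ B) ∨ P (A \ B))
    (key : ∀ S : ℕ → Set I, (∀ n, P (S n)) → ∃ i, {n | i ∈ S n}.Infinite) :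
    ∃ I₀ : Set I, I₀.Finite ∧ ¬ P I₀ᶜ := by
  classical
  refine ⟨{i | P {i}}, ?_, ?_⟩
  · by_contra hinf
    have hinf : ({i | P {i}} : Set I).Infinite := hinf
    obtain ⟨i, hi⟩ := key (fun n => {((hinf.natEmbedding _ n : _) : I)})
      (fun n => (hinf.natEmbedding _ n).2)
    apply hi
    apply Set.Subsingleton.finite
    intro a ha b hb
    simp only [Set.mem_ofPred_eq, Set.mem_singleton_iff] at ha hb
    exact (hinf.natEmbedding _).injective (Subtype.ext (ha.symm.trans hb))
  intro hP
  obtain ⟨A, hAI, hA, hatom⟩ : ∃ A : Set I, A ⊆ {i | P {i}}ᶜ ∧ P A ∧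
      ∀ B, P (A ∩ B) → ¬ P (A \ B) := by
    by_contra hno
    push Not at hno
    choose! g hg1 hg2 using hno
    let T : ℕ → Set I := fun n => Nat.rec {i | P {i}}ᶜ (fun _ A => A ∩ g A) n
    have hT : ∀ n, T (n+1) = T n ∩ g (T n) := fun n => rfl
    have hTP : ∀ n, T n ⊆ {i | P {i}}ᶜ ∧ P (T n) := by
      intro n
      induction n with
      | zero => exact ⟨subset_rfl, hP⟩
      | succ n ih =>
        rw [hT]
        exact ⟨Set.inter_subset_left.trans ih.1, hg1 _ ih.1 ih.2⟩
    have hanti : Antitone T := antitone_nat_of_succ_le (fun n => by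
      rw [hT]; exact Set.inter_subset_left)
    obtain ⟨i, hi⟩ := key (fun n => T n \ g (T n)) (fun n => hg2 _ (hTP n).1 (hTP n).2)
    apply hi
    apply Set.Subsingleton.finite
    have hlt : ∀ a b, i ∈ T a \ g (T a) → i ∈ T b \ g (T b) → ¬ a < b := by
      intro a b ha hb hab
      have := hanti (Nat.succ_le_of_lt hab) hb.1
      rw [Nat.succ_eq_add_one, hT] at this
      exact ha.2 this.2
    intro a ha b hb
    have h1 := hlt a b ha hb
    have h2 := hlt b a hb ha
    omega
  let F : Filter I :=
    { sets := {B | P (A ∩ B)}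
      univ_sets := by simpa using hA
      sets_of_superset := fun {x y} hx hxy => mono _ _ (Set.inter_subset_inter_right _ hxy) hx
      inter_sets := by
        intro x y hx hy
        simp only [Set.mem_ofPred_eq] at *
        rcases split _ y hx with h | h
        · rwa [← Set.inter_assoc]
        · exact absurd (mono _ _ (Set.diff_subset_diff_left Set.inter_subset_left) h)
            (hatom _ hy) }
  have hF : ∀ B, B ∈ F ↔ P (A ∩ B) := fun B => Iff.rfl
  let U : Ultrafilter I := Ultrafilter.ofComplNotMemIff F (by
    intro s
    rw [hF, hF, ← Set.diff_eq]
    constructor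
    · intro h
      exact (split A s hA).resolve_right h
    · exact hatom s)
  have hU : ∀ B, B ∈ U ↔ P (A ∩ B) := fun B => Iff.rfl
  have hcc : CountablyComplete U := by
    intro s hs
    by_contra hn
    rw [← Ultrafilter.compl_mem_iff_notMem] at hn
    obtain ⟨i, hi⟩ := key (fun n => A ∩ ((⋂ m ∈ Finset.range n, s m) ∩ (⋂ n, s n)ᶜ)) (by
      intro n
      rw [← hU]
      exact Filter.inter_mem ((Filter.biInter_finset_mem _).2 (fun m _ => hs m)) hn)
    obtain ⟨n, hn⟩ := hi.nonempty
    have hni : i ∉ ⋂ n, s n := hn.2.2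
    apply hni
    rw [Set.mem_iInter]
    intro m
    obtain ⟨b, hb, hmb⟩ := hi.exists_gt m
    have := hb.2.1
    simp only [Set.mem_iInter, Finset.mem_range] at this
    exact this m hmb
  have hnp : ∀ a : I, {a} ∉ U := by
    intro a ha
    rw [hU] at ha
    by_cases haA : a ∈ A
    · exact hAI haA (mono _ _ Set.inter_subset_right ha)
    · rw [Set.inter_singleton_eq_empty.2 haA] at ha
      exact hempty ha
  by_cases hc : Cardinal.aleph0 < Cardinal.mk I
  · refine hI ⟨hc, I, rfl, U, hcc, fun a h => hnp a ?_⟩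
    rw [h]
    exact Ultrafilter.mem_pure.2 rfl
  · rw [not_lt, Cardinal.mk_le_aleph0_iff] at hc
    haveI : Nonempty I := U.nonempty_of_mem Filter.univ_mem |>.to_type
    obtain ⟨e, he⟩ := exists_surjective_nat I
    have := hcc (fun n => {e n}ᶜ) (fun n => Ultrafilter.compl_mem_iff_notMem.2 (hnp _))
    have h0 : (⋂ n, ({e n}ᶜ : Set I)) = ∅ := by
      ext i
      obtain ⟨n, rfl⟩ := he i
      simp only [Set.mem_iInter, Set.mem_compl_iff, Set.mem_singleton_iff,
        Set.mem_empty_iff_false, iff_false]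
      exact fun h => h n rfl
    rw [h0] at this
    exact U.empty_notMem this

section
variable {k : Type*} [DenselyNormedField k] {I : Type*} {J : Type*}
    {V : I → Type*} [∀ i, NormedAddCommGroup (V i)] [∀ i, NormedSpace k (V i)]
    {W : J → Type*} [∀ j, NormedAddCommGroup (W j)] [∀ j, NormedSpace k (W j)]

/-- `A` is bad if restricting to `A` never lowers the norm. -/
def ChaseBad (f : lp V ∞ →L[k] lp W ∞) (A : Set I) : Prop :=
  ∀ c : ℝ, 0 ≤ c → c < ‖f‖ → ∀ J₀ : Set J, J₀.Finite →
    ∃ x : lp V ∞, (∀ i ∉ A, x i = 0) ∧ ∃ j ∉ J₀, c * ‖x‖ < ‖f x j‖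

theorem chase_restrict (x : lp V ∞) (B : Set I) :
    ∃ y : lp V ∞, (∀ i ∈ B, y i = x i) ∧ (∀ i ∉ B, y i = 0) ∧ ‖y‖ ≤ ‖x‖ := by
  classical
  have hb : ∀ i, ‖(if i ∈ B then x i else 0 : V i)‖ ≤ ‖x‖ := by
    intro i
    split_ifs
    · exact lp.norm_apply_le_norm (by simp) x i
    · simp
  refine ⟨⟨fun i => if i ∈ B then x i else 0, memℓp_infty ⟨‖x‖, ?_⟩⟩, ?_, ?_, ?_⟩
  · rintro _ ⟨i, rfl⟩
    exact hb i
  · intro i hi; exact if_pos hi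
  · intro i hi; exact if_neg hi
  · exact lp.norm_le_of_forall_le (norm_nonneg _) hb

theorem ChaseBad.split [∀ j, IsUltrametricDist (W j)] {f : lp V ∞ →L[k] lp W ∞} {A : Set I}
    (hA : ChaseBad f A) (B : Set I) : ChaseBad f (A ∩ B) ∨ ChaseBad f (A \ B) := by
  by_contra h
  rw [not_or] at h
  obtain ⟨h1, h2⟩ := h
  unfold ChaseBad at h1 h2
  push Not at h1 h2
  obtain ⟨c1, hc1, hc1', J1, hJ1, h1⟩ := h1
  obtain ⟨c2, hc2, hc2', J2, hJ2, h2⟩ := h2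
  obtain ⟨x, hx, j, hj, hxj⟩ := hA (max c1 c2) (le_max_of_le_left hc1) (max_lt hc1' hc2')
    (J1 ∪ J2) (hJ1.union hJ2)
  obtain ⟨y, hy1, hy2, hy3⟩ := chase_restrict x B
  have e : f x j = f y j + f (x - y) j := by
    rw [← Pi.add_apply, ← lp.coeFn_add, ← map_add]; simp
  have hz : ‖x - y‖ ≤ ‖x‖ := by
    refine lp.norm_le_of_forall_le (norm_nonneg _) (fun i => ?_)
    rw [lp.coeFn_sub, Pi.sub_apply]
    by_cases hi : i ∈ B
    · rw [hy1 i hi]; simp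
    · rw [hy2 i hi, sub_zero]; exact lp.norm_apply_le_norm (by simp) x i
  have b1 := h1 y (by
    intro i hi
    by_cases hiB : i ∈ B
    · rw [hy1 i hiB]; exact hx i (fun hiA => hi ⟨hiA, hiB⟩)
    · exact hy2 i hiB) j (fun h => hj (Or.inl h))
  have b2 := h2 (x - y) (by
    intro i hi
    rw [lp.coeFn_sub, Pi.sub_apply]
    by_cases hiB : i ∈ B
    · rw [hy1 i hiB, sub_self]
    · rw [hy2 i hiB, sub_zero]; exact hx i (fun hiA => hi ⟨hiA, hiB⟩)) j (fun h => hj (Or.inr h))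
  have b3 : ‖f x j‖ ≤ max ‖f y j‖ ‖f (x - y) j‖ := by
    rw [e]; exact IsUltrametricDist.norm_add_le_max _ _
  have b4 : ‖f y j‖ ≤ max c1 c2 * ‖x‖ :=
    b1.trans (mul_le_mul (le_max_left _ _) hy3 (norm_nonneg _) (le_max_of_le_left hc1))
  have b5 : ‖f (x - y) j‖ ≤ max c1 c2 * ‖x‖ :=
    b2.trans (mul_le_mul (le_max_right _ _) hz (norm_nonneg _) (le_max_of_le_left hc1))
  exact absurd (b3.trans (max_le b4 b5)) (not_le.2 hxj)

theorem ChaseBad.exists_vec {f : lp V ∞ →L[k] lp W ∞} {A : Set I}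
    (hA : ChaseBad f A) (hN : 0 < ‖f‖) {r s : ℝ} (hr : 0 < r) (hrs : r < s)
    {J₀ : Set J} (hJ : J₀.Finite) :
    ∃ x : lp V ∞, (∀ i ∉ A, x i = 0) ∧ ‖x‖ ≤ s ∧ ∃ j ∉ J₀, ‖f‖ * r < ‖f x j‖ := by
  obtain ⟨t, hrt, hts⟩ := exists_between hrs
  have ht : 0 < t := hr.trans hrt
  obtain ⟨x, hx, j, hj, hxj⟩ := hA (‖f‖ * (r / t)) (by positivity)
    (mul_lt_of_lt_one_right hN ((div_lt_one ht).2 hrt)) J₀ hJ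
  have hx0 : 0 < ‖x‖ := by
    rw [norm_pos_iff]
    rintro rfl
    simp at hxj
  obtain ⟨a, ha1, ha2⟩ := DenselyNormedField.lt_norm_lt (α := k) (t / ‖x‖) (s / ‖x‖)
    (by positivity) (by gcongr)
  rw [div_lt_iff₀ hx0] at ha1
  rw [lt_div_iff₀ hx0] at ha2
  refine ⟨a • x, ?_, ?_, j, hj, ?_⟩
  · intro i hi
    rw [lp.coeFn_smul, Pi.smul_apply, hx i hi, smul_zero]
  · rw [norm_smul]; exact ha2.le
  · rw [map_smul, lp.coeFn_smul, Pi.smul_apply, norm_smul]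
    have ha : 0 < ‖a‖ := pos_of_mul_pos_left (ht.trans ha1) hx0.le
    calc ‖f‖ * r = ‖f‖ * (r / t) * t := by field_simp
      _ ≤ ‖f‖ * (r / t) * (‖a‖ * ‖x‖) := by gcongr
      _ = ‖a‖ * (‖f‖ * (r / t) * ‖x‖) := by ring
      _ < _ := by gcongr

theorem chase_tail [∀ i, IsUltrametricDist (V i)] (x : ℕ → lp V ∞)
    (M : I → ℕ) (hM : ∀ i m, M i ≤ m → x m i = 0)
    (r : ℕ → ℝ) (hr0 : ∀ n, 0 ≤ r n) (hr : Antitone r) (hxr : ∀ n, ‖x n‖ ≤ r n) :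
    ∃ T : ℕ → lp V ∞, (∀ n, T n = x n + T (n+1)) ∧ ∀ n, ‖T n‖ ≤ r n := by
  have hb : ∀ n i, ‖∑ m ∈ Finset.Ico n (M i), x m i‖ ≤ r n := by
    intro n i
    refine IsUltrametricDist.norm_sum_le_of_forall_le_of_nonneg (hr0 n) (fun m hm => ?_)
    exact (lp.norm_apply_le_norm (by simp) (x m) i).trans
      ((hxr m).trans (hr (Finset.mem_Ico.1 hm).1))
  refine ⟨fun n => ⟨fun i => ∑ m ∈ Finset.Ico n (M i), x m i, memℓp_infty ⟨r n, ?_⟩⟩, ?_, ?_⟩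
  · rintro _ ⟨i, rfl⟩
    exact hb n i
  · intro n
    ext i
    rw [lp.coeFn_add, Pi.add_apply]
    change ∑ m ∈ Finset.Ico n (M i), x m i = x n i + ∑ m ∈ Finset.Ico (n+1) (M i), x m i
    rcases lt_or_ge n (M i) with h | h
    · exact Finset.sum_eq_sum_Ico_succ_bot h _
    · rw [hM i n h, Finset.Ico_eq_empty_of_le h, Finset.Ico_eq_empty_of_le (by omega)]
      simp
  · intro n
    exact lp.norm_le_of_forall_le (hr0 n) (hb n)

theorem chase_key [∀ i, IsUltrametricDist (V i)] [∀ j, IsUltrametricDist (W j)]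
    (f : lp V ∞ →L[k] lp W ∞)
    (hf_range : ∀ x : lp V ∞, ∀ ε > (0 : ℝ), {j : J | ε < ‖f x j‖}.Finite)
    (hN : 0 < ‖f‖) (S : ℕ → Set I) (hS : ∀ n, ChaseBad f (S n)) :
    ∃ i, {n | i ∈ S n}.Infinite := by
  by_contra hfin
  push Not at hfin
  let r : ℕ → ℝ := fun n => 1 + 1 / ((n : ℝ) + 1)
  have hr1 : ∀ n, 1 < r n := fun n => by
    have : (0 : ℝ) < 1 / ((n : ℝ) + 1) := by positivity
    simp only [r]; linarith
  have hrs : StrictAnti r := strictAnti_nat_of_succ_lt (fun n => by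
    simp only [r]; push_cast; gcongr; linarith)
  have hex : ∀ (n : ℕ) (J₀ : {s : Set J // s.Finite}), ∃ x : lp V ∞, (∀ i ∉ S n, x i = 0) ∧
      ‖x‖ ≤ r n ∧ ∃ j ∉ J₀.1, ‖f‖ * r (n+1) < ‖f x j‖ := fun n J₀ =>
    (hS n).exists_vec hN (zero_lt_one.trans (hr1 _)) (hrs (Nat.lt_succ_self n)) J₀.2
  choose X hX1 hX2 jj hjj hX3 using hex
  let Q : ℕ → {s : Set J // s.Finite} := fun n => Nat.rec ⟨∅, Set.finite_empty⟩
    (fun n q => ⟨q.1 ∪ {j | ‖f‖ < ‖f (X n q) j‖}, q.2.union (hf_range _ _ hN)⟩) n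
  have hQ : ∀ n, (Q (n+1)).1 = (Q n).1 ∪ {j | ‖f‖ < ‖f (X n (Q n)) j‖} := fun n => rfl
  have hQm : Monotone (fun n => (Q n).1) := monotone_nat_of_le_succ (fun n => by
    simp only [hQ]; exact Set.subset_union_left)
  have hNr : ∀ n, ‖f‖ < ‖f‖ * r n := fun n => lt_mul_of_one_lt_right hN (hr1 n)
  have hlt : ∀ m n, m < n → ‖f (X m (Q m)) (jj n (Q n))‖ ≤ ‖f‖ := by
    intro m n hmn
    by_contra hcon
    rw [not_le] at hcon
    apply hjj n (Q n)
    apply hQm (Nat.succ_le_of_lt hmn)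
    change _ ∈ (Q (m+1)).1
    rw [hQ]
    exact Or.inr hcon
  have hinj : Function.Injective (fun n => jj n (Q n)) := by
    have : ∀ m n, m < n → jj m (Q m) ≠ jj n (Q n) := by
      intro m n hmn he
      have h1 := hlt m n hmn
      rw [← he] at h1
      have h2 := hX3 m (Q m)
      have h3 := hNr (m+1)
      linarith
    intro m n he
    rcases lt_trichotomy m n with h | h | h
    · exact absurd he (this _ _ h)
    · exact h
    · exact absurd he.symm (this _ _ h)
  have hM : ∀ i, ∃ M : ℕ, ∀ m, M ≤ m → X m (Q m) i = 0 := by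
    intro i
    obtain ⟨b, hb⟩ := (hfin i).bddAbove
    refine ⟨b + 1, fun m hm => hX1 _ _ _ (fun h => ?_)⟩
    have : m ≤ b := hb h
    omega
  choose M hM using hM
  obtain ⟨T, hT1, hT2⟩ := chase_tail (fun n => X n (Q n)) M hM r
    (fun n => (zero_lt_one.trans (hr1 n)).le) hrs.antitone (fun n => hX2 _ _)
  have hop : ∀ (x : lp V ∞) j, ‖f x j‖ ≤ ‖f‖ * ‖x‖ := fun x j =>
    (lp.norm_apply_le_norm (by simp) (f x) j).trans (f.le_opNorm x)
  have hTn : ∀ n, ‖f‖ * r (n+1) < ‖f (T n) (jj n (Q n))‖ := by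
    intro n
    by_contra hcon
    rw [not_lt] at hcon
    have e : f (X n (Q n)) (jj n (Q n)) = f (T n) (jj n (Q n)) - f (T (n+1)) (jj n (Q n)) := by
      rw [hT1 n, map_add, lp.coeFn_add, Pi.add_apply, add_sub_cancel_right]
    have h1 := hX3 n (Q n)
    rw [e] at h1
    have h2 := chase_norm_sub_le_max (f (T n) (jj n (Q n))) (f (T (n+1)) (jj n (Q n)))
    have h3 : ‖f (T (n+1)) (jj n (Q n))‖ ≤ ‖f‖ * r (n+1) :=
      (hop _ _).trans (by gcongr; exact hT2 _)
    exact absurd (h2.trans (max_le hcon h3)) (not_le.2 h1)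
  have hdiff : ∀ n m, m ≤ n → ‖f (T 0) (jj n (Q n)) - f (T m) (jj n (Q n))‖ ≤ ‖f‖ := by
    intro n m
    induction m with
    | zero => intro _; rw [sub_self, norm_zero]; exact hN.le
    | succ m ih =>
      intro hm
      have e : f (T 0) (jj n (Q n)) - f (T (m+1)) (jj n (Q n)) =
          (f (T 0) (jj n (Q n)) - f (T m) (jj n (Q n))) + f (X m (Q m)) (jj n (Q n)) := by
        rw [hT1 m, map_add, lp.coeFn_add, Pi.add_apply]; abel
      rw [e]
      exact (IsUltrametricDist.norm_add_le_max _ _).trans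
        (max_le (ih (by omega)) (hlt m n (by omega)))
  have hbig : ∀ n, ‖f‖ < ‖f (T 0) (jj n (Q n))‖ := by
    intro n
    by_contra hcon
    rw [not_lt] at hcon
    have h1 := chase_norm_sub_le_max (f (T 0) (jj n (Q n)))
      (f (T 0) (jj n (Q n)) - f (T n) (jj n (Q n)))
    rw [sub_sub_cancel] at h1
    have h2 := h1.trans (max_le hcon (hdiff n n le_rfl))
    have h3 := hTn n
    have h4 := hNr (n+1)
    linarith
  exact Set.infinite_of_injective_forall_mem hinj hbig (hf_range (T 0) ‖f‖ hN)

end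

/-- Operator norm reduction: the induced map `f ↾^{I₀,J₀}` (restriction of `f` to the
sub-product supported off `I₀`, followed by the projection of `⊕ W` killing the
coordinates in `J₀`) has operator norm strictly smaller than `‖f‖`, expressed via a
bounding constant `c < ‖f‖`. -/
theorem nonarchimedean_chase_operator_norm_reduction
    {k : Type*} [DenselyNormedField k] [CompleteSpace k] [IsUltrametricDist k]
    {I J : Type u}
    (hI : ¬ IsOmegaOneMeasurable (Cardinal.mk I))
    (V : I → Type*) [∀ i, NormedAddCommGroup (V i)] [∀ i, NormedSpace k (V i)]
    [∀ i, CompleteSpace (V i)] [∀ i, IsUltrametricDist (V i)]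
    (W : J → Type*) [∀ j, NormedAddCommGroup (W j)] [∀ j, NormedSpace k (W j)]
    [∀ j, CompleteSpace (W j)] [∀ j, IsUltrametricDist (W j)]
    (f : lp V ∞ →L[k] lp W ∞)
    (hf_range : ∀ x : lp V ∞, ∀ ε > (0 : ℝ), {j : J | ε < ‖f x j‖}.Finite)
    (hf_ne : f ≠ 0) :
    ∃ I₀ : Set I, I₀.Finite ∧ ∃ J₀ : Set J, J₀.Finite ∧
      ∃ c : ℝ, 0 ≤ c ∧ c < ‖f‖ ∧
        ∀ x : lp V ∞, (∀ i ∈ I₀, x i = 0) →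
          ∀ j ∉ J₀, ‖f x j‖ ≤ c * ‖x‖ := by
  have hN : 0 < ‖f‖ := norm_pos_iff.2 hf_ne
  obtain ⟨I₀, hI₀, hbad⟩ := chase_comb hI (ChaseBad f)
    (by
      intro A B hAB hA c hc hc' J₀ hJ₀
      obtain ⟨x, hx, h⟩ := hA c hc hc' J₀ hJ₀
      exact ⟨x, fun i hi => hx i (fun h => hi (hAB h)), h⟩)
    (by
      intro h
      obtain ⟨x, hx, j, -, hj⟩ := h 0 le_rfl hN ∅ Set.finite_empty
      have : x = 0 := by
        ext i
        exact hx i (Set.notMem_empty i)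
      subst this
      simp at hj)
    (fun A B hA => hA.split B)
    (fun S hS => chase_key f hf_range hN S hS)
  unfold ChaseBad at hbad
  push Not at hbad
  obtain ⟨c, hc, hc', J₀, hJ₀, h⟩ := hbad
  exact ⟨I₀, hI₀, J₀, hJ₀, c, hc, hc', fun x hx j hj =>
    h x (fun i hi => hx i (not_not.1 hi)) j hj⟩
end
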